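/- For every R > 0 and every u ∈ H¹(Ω_R³) vanishing on ∂Ω_R³ ∩ ∂Λ, one has the quadratic form lower bound ∫_{Ω_R³} |∇u|² dx ≥ λ₁(Γ_R) ∫_{Ω_R³} |u|² dx. (This is the key estimate showing that the bottom of the essential spectrum of the Dirichlet Laplacian on the Fichera layer Λ is at least λ₁(Γ).) -/

import Mathlib

/-!
The inequality is proved slice by slice in `x₃ = t > R`: dropping `(∂₃u)²`, it is enough that the
slice `w = u(·, ·, t)` satisfies `∫_{Γ_t} |∇w|² ≥ λ₁(Γ_R) ∫_{Γ_t} w²` (`slice_nonneg`). The guide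
`Γ_t` is the disjoint union of `Γ_R` and of the two rectangles `[R, t) × (-1, 0)` and
`(-1, 0) × [R, t)`. On `Γ_R` the inequality is the definition of `λ₁(Γ_R)` (`lamR_mul_le`). On the
rectangles `w` vanishes on the two long sides, so Wirtinger's inequality (`wirtinger`) gives the
constant `π²`, and one concludes with `λ₁(Γ_R) ≤ π²`.

The upper bound `λ₁(Γ_R) ≤ π²` (`lamR_le_pi_sq`) comes from the trial function
`a(x₁) b(x₂) + b(x₁) a(x₂)`, where `a(x) = cos (π x / 2)` for `x ≤ 0` and `a = 1` for `x ≥ 0`, while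
`b(x) = -sin (π x)` for `x ≤ 0` and `b = 0` for `x ≥ 0`. Both arms contribute nothing to
`∫ |∇w|² - π² ∫ w²`, and the corner square contributes `π² / 8 - 16 / 9 < 0`. Since `b` is not `C¹` at
`0`, it is replaced by `bₙ(x) = b(x) (1 - exp (n x))`, and all integrals pass to the limit
`n → ∞` by dominated convergence.
-/

noncomputable section
open MeasureTheory Set Real

/-- The interval `I = (-1,0)`. -/
def II : Set ℝ := Set.Ioo (-1) 0

/-- The broken guide `Γ = {x ∈ ℝ² : -1 < min(x₁,x₂) < 0}`. -/
def Gam : Set (ℝ × ℝ) := {p | -1 < min p.1 p.2 ∧ min p.1 p.2 < 0}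

/-- The box `□_L = {x : max(|x₁+1|,|x₂+1|) < L}`. -/
def Box (L : ℝ) : Set (ℝ × ℝ) := {p | |p.1 + 1| < L ∧ |p.2 + 1| < L}

/-- The finite guide `Γ_R = Γ ∩ □_{R+1}`. -/
def GamR (R : ℝ) : Set (ℝ × ℝ) := Gam ∩ Box (R + 1)

/-- The Neumann part `Σ_R = ∂Γ_R ∩ ∂□_{R+1}` of the boundary. -/
def Sig (R : ℝ) : Set (ℝ × ℝ) := frontier (GamR R) ∩ frontier (Box (R + 1))

/-- The Dirichlet part `∂Γ_R ∖ Σ_R` of the boundary. -/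
def DirB (R : ℝ) : Set (ℝ × ℝ) := frontier (GamR R) \ Sig R

/-- Squared gradient `|∇u|² = (∂₁u)² + (∂₂u)²`. -/
def gradSq2 (u : ℝ × ℝ → ℝ) (p : ℝ × ℝ) : ℝ :=
  (fderiv ℝ u p (1, 0)) ^ 2 + (fderiv ℝ u p (0, 1)) ^ 2

/-- Admissible functions for the mixed problem on `Γ_R`: `C¹` up to the boundary
(modelled by a globally `C¹` extension) vanishing on the Dirichlet part. -/
def AdmR (R : ℝ) (u : ℝ × ℝ → ℝ) : Prop :=
  ContDiff ℝ 1 u ∧ ∀ p ∈ DirB R, u p = 0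

/-- First Rayleigh quotient `λ₁(Γ_R)` of the mixed Dirichlet–Neumann Laplacian on `Γ_R`. -/
def lamR (R : ℝ) : ℝ :=
  sInf {r | ∃ u : ℝ × ℝ → ℝ, AdmR R u ∧ (∫ p in GamR R, (u p) ^ 2) ≠ 0 ∧
    r = (∫ p in GamR R, gradSq2 u p) / ∫ p in GamR R, (u p) ^ 2}

/-- First Rayleigh quotient `λ₁(Γ)` of the Dirichlet Laplacian on the broken guide `Γ`. -/
def lamG : ℝ :=
  sInf {r | ∃ u : ℝ × ℝ → ℝ, ContDiff ℝ 1 u ∧ HasCompactSupport u ∧ tsupport u ⊆ Gam ∧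
    (∫ p in Gam, (u p) ^ 2) ≠ 0 ∧
    r = (∫ p in Gam, gradSq2 u p) / ∫ p in Gam, (u p) ^ 2}

/-- `ω = √(π² − λ₁(Γ))`. -/
def omega : ℝ := Real.sqrt (π ^ 2 - lamG)

/-- The Fichera layer `Λ = {x ∈ ℝ³ : -1 < min(x₁,x₂,x₃) < 0}`. -/
def Lam3 : Set (ℝ × ℝ × ℝ) :=
  {x | -1 < min x.1 (min x.2.1 x.2.2) ∧ min x.1 (min x.2.1 x.2.2) < 0}

/-- The residual domain `Ω_R³ = {x : x₃ > R and (x₁,x₂) ∈ Γ_{x₃}}`. -/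
def Om3 (R : ℝ) : Set (ℝ × ℝ × ℝ) := {x | R < x.2.2 ∧ (x.1, x.2.1) ∈ GamR x.2.2}

/-- Squared gradient in 3D: `|∇u|² = (∂₁u)² + (∂₂u)² + (∂₃u)²`. -/
def gradSq3 (u : ℝ × ℝ × ℝ → ℝ) (x : ℝ × ℝ × ℝ) : ℝ :=
  (fderiv ℝ u x (1, 0, 0)) ^ 2 + (fderiv ℝ u x (0, 1, 0)) ^ 2 + (fderiv ℝ u x (0, 0, 1)) ^ 2

/-! ### Geometry of the guides and of their Dirichlet boundary -/

lemma mem_GamR {t : ℝ} (ht : 0 < t) (p : ℝ × ℝ) :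
    p ∈ GamR t ↔ (-1 < p.1 ∧ p.1 < t) ∧ (-1 < p.2 ∧ p.2 < t) ∧ (p.1 < 0 ∨ p.2 < 0) := by
  simp only [GamR, Gam, Box, mem_inter_iff, mem_ofPred_eq, lt_min_iff, min_lt_iff, abs_lt]
  constructor
  · rintro ⟨⟨⟨h1, h2⟩, h3⟩, ⟨h4, h5⟩, h6, h7⟩
    exact ⟨⟨h1, by linarith⟩, ⟨h2, by linarith⟩, h3⟩
  · rintro ⟨⟨h1, h2⟩, ⟨h3, h4⟩, h5⟩
    exact ⟨⟨⟨h1, h3⟩, h5⟩, ⟨by linarith, by linarith⟩, by linarith, by linarith⟩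

lemma isOpen_Gam : IsOpen Gam := by
  have h : Continuous fun p : ℝ × ℝ => min p.1 p.2 := by fun_prop
  exact (isOpen_lt continuous_const h).inter (isOpen_lt h continuous_const)

lemma isOpen_Box (L : ℝ) : IsOpen (Box L) := by
  have h1 : Continuous fun p : ℝ × ℝ => |p.1 + 1| := by fun_prop
  have h2 : Continuous fun p : ℝ × ℝ => |p.2 + 1| := by fun_prop
  exact (isOpen_lt h1 continuous_const).inter (isOpen_lt h2 continuous_const)

lemma isOpen_GamR (t : ℝ) : IsOpen (GamR t) := isOpen_Gam.inter (isOpen_Box _)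

lemma GamR_mono {R t : ℝ} (h : R ≤ t) : GamR R ⊆ GamR t := by
  rintro p ⟨hp, h1, h2⟩
  exact ⟨hp, lt_of_lt_of_le h1 (by linarith), lt_of_lt_of_le h2 (by linarith)⟩

lemma GamR_subset_Icc {t : ℝ} (ht : 0 < t) : GamR t ⊆ Icc (-1) t ×ˢ Icc (-1) t := by
  intro p hp
  obtain ⟨h1, h2, -⟩ := (mem_GamR ht p).1 hp
  exact ⟨⟨h1.1.le, h1.2.le⟩, h2.1.le, h2.2.le⟩

/-- The Dirichlet part of `∂Γ_R` lies inside the open box, so its points are not in `Γ`. -/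
lemma mem_of_DirB {R : ℝ} {p : ℝ × ℝ} (hp : p ∈ DirB R) :
    p ∈ closure (GamR R) ∧ p ∉ Gam := by
  obtain ⟨h1, h2⟩ := hp
  have hc : p ∈ closure (GamR R) := h1.1
  refine ⟨hc, fun hG => ?_⟩
  have hB : p ∈ Box (R + 1) := by
    by_contra hB
    refine h2 ⟨h1, closure_mono inter_subset_right hc, ?_⟩
    rwa [(isOpen_Box _).interior_eq]
  apply h1.2
  rw [(isOpen_GamR _).interior_eq]
  exact ⟨hG, hB⟩

lemma isOpen_Lam3 : IsOpen Lam3 := by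
  have h : Continuous fun x : ℝ × ℝ × ℝ => min x.1 (min x.2.1 x.2.2) := by fun_prop
  exact (isOpen_lt continuous_const h).inter (isOpen_lt h continuous_const)

lemma isOpen_Om3 (R : ℝ) : IsOpen (Om3 R) := by
  have h : Om3 R = {x | R < x.2.2} ∩ {x | -1 < min x.1 x.2.1} ∩ {x | min x.1 x.2.1 < 0}
      ∩ {x | |x.1 + 1| < x.2.2 + 1} ∩ {x | |x.2.1 + 1| < x.2.2 + 1} := by
    ext x
    simp only [Om3, GamR, Gam, Box, mem_inter_iff, mem_ofPred_eq]
    tauto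
  rw [h]
  refine ((((?_ : IsOpen _).inter ?_).inter ?_).inter ?_).inter ?_
  all_goals apply isOpen_lt <;> fun_prop

/-- The slice `x₃ = t` of `u` satisfies the Dirichlet condition on the part of `∂Γ_t` off `Γ`, since
`t > 0` makes the point `(p, t)` a boundary point of both `Ω_R³` and `Λ`. -/
lemma slice_zero {R t : ℝ} (hR : 0 < R) (ht : R < t) {u : ℝ × ℝ × ℝ → ℝ}
    (hu : ∀ x ∈ frontier (Om3 R) ∩ frontier Lam3, u x = 0) {p : ℝ × ℝ}
    (hp : p ∈ closure (GamR t)) (hG : p ∉ Gam) : u (p.1, p.2, t) = 0 := by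
  have hcont : Continuous fun q : ℝ × ℝ => ((q.1, q.2, t) : ℝ × ℝ × ℝ) := by fun_prop
  have hLam : ∀ q : ℝ × ℝ, (q.1, q.2, t) ∈ Lam3 ↔ q ∈ Gam := by
    intro q
    simp only [Lam3, Gam, mem_ofPred_eq, lt_min_iff, min_lt_iff]
    constructor
    · rintro ⟨⟨h1, h2, h3⟩, h4⟩
      refine ⟨⟨h1, h2⟩, ?_⟩
      rcases h4 with h | h | h
      · exact Or.inl h
      · exact Or.inr h
      · linarith
    · rintro ⟨⟨h1, h2⟩, h4⟩
      refine ⟨⟨h1, h2, by linarith⟩, ?_⟩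
      tauto
  apply hu
  have hOm : MapsTo (fun q : ℝ × ℝ => ((q.1, q.2, t) : ℝ × ℝ × ℝ)) (GamR t) (Om3 R) :=
    fun q hq => ⟨ht, hq⟩
  have hLa : MapsTo (fun q : ℝ × ℝ => ((q.1, q.2, t) : ℝ × ℝ × ℝ)) (GamR t) Lam3 :=
    fun q hq => (hLam q).2 hq.1
  have c1 := map_mem_closure hcont hp hOm
  have c2 := map_mem_closure hcont hp hLa
  refine ⟨⟨c1, ?_⟩, ⟨c2, ?_⟩⟩
  · rw [(isOpen_Om3 R).interior_eq]
    exact fun h => hG h.2.1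
  · rw [isOpen_Lam3.interior_eq]
    exact fun h => hG ((hLam p).1 h)

lemma mem_closure_arm {t x y : ℝ} (ht : 0 < t) (h1 : -1 < x) (h2 : x < t)
    (hy : y ∈ Icc (-1 : ℝ) 0) : (x, y) ∈ closure (GamR t) := by
  have hc : Continuous fun s : ℝ => (x, s) := by fun_prop
  rw [← closure_Ioo (by norm_num : (-1 : ℝ) ≠ 0)] at hy
  refine map_mem_closure hc hy fun s hs => (mem_GamR ht _).2 ?_
  exact ⟨⟨h1, h2⟩, ⟨hs.1, hs.2.trans ht⟩, Or.inr hs.2⟩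

lemma mem_closure_arm' {t x y : ℝ} (ht : 0 < t) (h1 : -1 < x) (h2 : x < t)
    (hy : y ∈ Icc (-1 : ℝ) 0) : (y, x) ∈ closure (GamR t) := by
  have hc : Continuous fun s : ℝ => (s, x) := by fun_prop
  rw [← closure_Ioo (by norm_num : (-1 : ℝ) ≠ 0)] at hy
  refine map_mem_closure (f := fun s : ℝ => (s, x)) hc hy fun s hs => (mem_GamR ht _).2 ?_
  exact ⟨⟨hs.1, hs.2.trans ht⟩, ⟨h1, h2⟩, Or.inl hs.2⟩

lemma continuous_gradSq2 {u : ℝ × ℝ → ℝ} (hu : ContDiff ℝ 1 u) : Continuous (gradSq2 u) := by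
  have h := hu.continuous_fderiv one_ne_zero
  unfold gradSq2
  fun_prop

lemma continuous_gradSq3 {u : ℝ × ℝ × ℝ → ℝ} (hu : ContDiff ℝ 1 u) :
    Continuous (gradSq3 u) := by
  have h := hu.continuous_fderiv one_ne_zero
  unfold gradSq3
  fun_prop

lemma gradSq2_nonneg (u : ℝ × ℝ → ℝ) (p : ℝ × ℝ) : 0 ≤ gradSq2 u p := by
  unfold gradSq2; positivity

/-- The variational inequality defining `λ₁(Γ_R)`, free of the nonvanishing condition. -/
lemma lamR_mul_le {R : ℝ} {u : ℝ × ℝ → ℝ} (hu : AdmR R u) :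
    lamR R * ∫ p in GamR R, (u p) ^ 2 ≤ ∫ p in GamR R, gradSq2 u p := by
  have hg : ∀ v : ℝ × ℝ → ℝ, 0 ≤ ∫ p in GamR R, gradSq2 v p := fun v =>
    integral_nonneg fun p => gradSq2_nonneg v p
  have hs : ∀ v : ℝ × ℝ → ℝ, 0 ≤ ∫ p in GamR R, (v p) ^ 2 := fun v =>
    integral_nonneg fun p => sq_nonneg _
  by_cases h : (∫ p in GamR R, (u p) ^ 2) = 0
  · rw [h, mul_zero]; exact hg u
  · have hpos := lt_of_le_of_ne (hs u) (Ne.symm h)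
    rw [← le_div_iff₀ hpos]
    refine csInf_le ⟨0, ?_⟩ ⟨u, hu, h, rfl⟩
    rintro r ⟨v, -, -, rfl⟩
    exact div_nonneg (hg v) (hs v)

lemma integrableOn_of_subset_Icc {f : ℝ × ℝ → ℝ} (hf : Continuous f) {s : Set (ℝ × ℝ)} {t : ℝ}
    (hs : s ⊆ Icc (-1) t ×ˢ Icc (-1) t) : IntegrableOn f s :=
  (hf.continuousOn.integrableOn_compact (isCompact_Icc.prod isCompact_Icc)).mono_set hs

/-! ### Wirtinger's inequality -/

/-- Wirtinger's inequality with a constant `μ < π`: the function `cos (μ (x + 1/2))` is then positive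
on the closed interval `[-1, 0]`, so the ground state substitution has no singular endpoints. -/
lemma wirtinger_aux {v v' : ℝ → ℝ} (hv : ∀ x, HasDerivAt v (v' x) x) (hc : Continuous v')
    (h0 : v (-1) = 0) (h1 : v 0 = 0) {μ : ℝ} (hμ : 0 < μ) (hμπ : μ < π) :
    0 ≤ ∫ x in (-1 : ℝ)..0, (v' x ^ 2 - μ ^ 2 * v x ^ 2) := by
  have hvc : Continuous v := continuous_iff_continuousAt.2 fun x => (hv x).continuousAt
  have hpos : ∀ x ∈ Icc (-1 : ℝ) 0, 0 < cos (μ * (x + 1 / 2)) := by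
    intro x hx
    apply cos_pos_of_mem_Ioo
    constructor <;> nlinarith [hx.1, hx.2]
  have hφ : ∀ x, HasDerivAt (fun x => cos (μ * (x + 1 / 2))) (-sin (μ * (x + 1 / 2)) * μ) x := by
    intro x
    have := (((hasDerivAt_id x).add_const (1 / 2 : ℝ)).const_mul μ).cos
    simpa using this
  have hψ : ∀ x, HasDerivAt (fun x => -sin (μ * (x + 1 / 2)) * μ)
      (-cos (μ * (x + 1 / 2)) * μ ^ 2) x := by
    intro x
    have := ((((hasDerivAt_id x).add_const (1 / 2 : ℝ)).const_mul μ).sin.neg).mul_const μ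
    refine this.congr_deriv ?_
    simp; ring
  set φ := fun x => cos (μ * (x + 1 / 2)) with hφdef
  set ψ := fun x => -sin (μ * (x + 1 / 2)) * μ with hψdef
  have hφc : Continuous φ := by fun_prop
  have hψc : Continuous ψ := by fun_prop
  -- `(v² φ'/φ)' = v'² - μ² v² - (v' - (φ'/φ) v)²`, because `φ'' = -μ² φ`
  have hd : ∀ x ∈ uIcc (-1 : ℝ) 0, HasDerivAt (fun x => v x ^ 2 * (ψ x / φ x))
      ((v' x ^ 2 - μ ^ 2 * v x ^ 2) - (v' x - ψ x / φ x * v x) ^ 2) x := by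
    intro x hx
    rw [uIcc_of_le (by norm_num)] at hx
    have hne : φ x ≠ 0 := (hpos x hx).ne'
    have := ((hv x).pow 2).mul ((hψ x).div (hφ x) hne)
    refine this.congr_deriv ?_
    have e1 : -cos (μ * (x + 1 / 2)) * μ ^ 2 = - φ x * μ ^ 2 := rfl
    rw [e1]
    change _ * (ψ x / φ x) + _ * ((_ * φ x - ψ x * ψ x) / φ x ^ 2) = _
    simp only [Pi.pow_apply]
    field_simp
    ring
  have hq : ContinuousOn (fun x => (v' x - ψ x / φ x * v x) ^ 2) (uIcc (-1 : ℝ) 0) := by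
    rw [uIcc_of_le (by norm_num)]
    refine ((hc.continuousOn).sub ((hψc.continuousOn.div hφc.continuousOn
      fun x hx => (hpos x hx).ne').mul hvc.continuousOn)).pow 2
  have hp : Continuous fun x => v' x ^ 2 - μ ^ 2 * v x ^ 2 := by fun_prop
  have key := intervalIntegral.integral_eq_sub_of_hasDerivAt hd
    ((hp.continuousOn.sub hq).intervalIntegrable)
  rw [intervalIntegral.integral_sub (hp.intervalIntegrable _ _) hq.intervalIntegrable] at key
  simp only [h0, h1] at key
  have : 0 ≤ ∫ x in (-1 : ℝ)..0, (v' x - ψ x / φ x * v x) ^ 2 :=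
    intervalIntegral.integral_nonneg (by norm_num) fun x _ => sq_nonneg _
  linarith

/-- Wirtinger's inequality on `(-1, 0)` with the sharp constant `π²`. -/
lemma wirtinger {v v' : ℝ → ℝ} (hv : ∀ x, HasDerivAt v (v' x) x) (hc : Continuous v')
    (h0 : v (-1) = 0) (h1 : v 0 = 0) :
    π ^ 2 * (∫ x in (-1 : ℝ)..0, v x ^ 2) ≤ ∫ x in (-1 : ℝ)..0, v' x ^ 2 := by
  have hvc : Continuous v := continuous_iff_continuousAt.2 fun x => (hv x).continuousAt
  have i1 : Continuous fun x => v' x ^ 2 := by fun_prop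
  have i2 : Continuous fun x => v x ^ 2 := by fun_prop
  have hlim : Filter.Tendsto (fun μ : ℝ => μ ^ 2 * (∫ x in (-1 : ℝ)..0, v x ^ 2))
      (nhdsWithin π (Iio π)) (nhds (π ^ 2 * (∫ x in (-1 : ℝ)..0, v x ^ 2))) := by
    refine Filter.Tendsto.mono_left ?_ nhdsWithin_le_nhds
    exact Continuous.tendsto (by fun_prop) π
  refine le_of_tendsto hlim ?_
  filter_upwards [Ioo_mem_nhdsLT pi_pos] with μ hμ
  have := wirtinger_aux hv hc h0 h1 hμ.1 hμ.2
  rw [intervalIntegral.integral_sub (i1.intervalIntegrable _ _)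
    ((i2.const_mul _).intervalIntegrable _ _), intervalIntegral.integral_const_mul] at this
  linarith

/-! ### The trial function and `λ₁(Γ_R) ≤ π²` -/

/-- A function with vanishing derivative at `0`, frozen at its value `F 0` for `x ≥ 0`, is again
differentiable. -/
lemma hasDerivAt_comp_min {F F' : ℝ → ℝ} (hF : ∀ x, HasDerivAt F (F' x) x) (h0 : F' 0 = 0)
    (x : ℝ) : HasDerivAt (fun x => F (min x 0)) (F' (min x 0)) x := by
  rcases lt_trichotomy x 0 with hx | rfl | hx
  · rw [min_eq_left hx.le]
    refine (hF x).congr_of_eventuallyEq ?_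
    filter_upwards [Iio_mem_nhds hx] with y hy
    rw [min_eq_left (le_of_lt hy)]
  · rw [min_self, h0, ← hasDerivWithinAt_univ, ← Iic_union_Ici (a := (0 : ℝ))]
    have h := hF 0
    rw [h0] at h
    refine HasDerivWithinAt.union (h.hasDerivWithinAt.congr ?_ ?_)
      ((hasDerivWithinAt_const (0 : ℝ) (Ici 0) (F 0)).congr ?_ ?_)
    · intro y hy; rw [min_eq_left hy]
    · simp
    · intro y hy; rw [min_eq_right hy]
    · simp
  · rw [min_eq_right hx.le, h0]
    refine (hasDerivAt_const x (F 0)).congr_of_eventuallyEq ?_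
    filter_upwards [Ioi_mem_nhds hx] with y hy
    rw [min_eq_right (le_of_lt hy)]

lemma contDiff_of_hasDerivAt {f f' : ℝ → ℝ} (h : ∀ x, HasDerivAt f (f' x) x)
    (hc : Continuous f') : ContDiff ℝ 1 f := by
  rw [contDiff_one_iff_deriv]
  refine ⟨fun x => (h x).differentiableAt, ?_⟩
  rwa [show deriv f = f' from funext fun x => (h x).deriv]

/-- The longitudinal profile of the trial function: `cos (π x / 2)` on the corner part `x ≤ 0`,
continued by `1` along the arm `x ≥ 0`. It is `C¹` and vanishes at `x = -1`. -/
def aFun (x : ℝ) : ℝ := cos (π / 2 * min x 0)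

/-- The derivative of `aFun`. -/
def aDer (x : ℝ) : ℝ := -(π / 2) * sin (π / 2 * min x 0)

/-- The transversal profile of the trial function: `-sin (π x)`, the first Dirichlet mode of
`(-1, 0)`, multiplied by `1 - exp (n x)` and continued by `0` to `x ≥ 0`. The extra factor makes the
zero at `x = 0` double, so that the continuation is `C¹`; it tends to `1` on `x < 0` as
`n → ∞`. -/
def bFun (n x : ℝ) : ℝ := -sin (π * min x 0) * (1 - exp (n * min x 0))

/-- The derivative of `bFun n`. -/
def bDer (n x : ℝ) : ℝ :=
  -(π * cos (π * min x 0)) * (1 - exp (n * min x 0)) + n * exp (n * min x 0) * sin (π * min x 0)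

lemma hasDerivAt_aFun (x : ℝ) : HasDerivAt aFun (aDer x) x := by
  refine hasDerivAt_comp_min (F := fun x => cos (π / 2 * x))
    (F' := fun x => -(π / 2) * sin (π / 2 * x)) (fun x => ?_) (by simp) x
  refine (((hasDerivAt_id x).const_mul (π / 2)).cos).congr_deriv ?_
  simp; ring

lemma hasDerivAt_bFun (n x : ℝ) : HasDerivAt (bFun n) (bDer n x) x := by
  refine hasDerivAt_comp_min (F := fun x => -sin (π * x) * (1 - exp (n * x)))
    (F' := fun x => -(π * cos (π * x)) * (1 - exp (n * x)) + n * exp (n * x) * sin (π * x))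
    (fun x => ?_) (by simp) x
  refine ((((hasDerivAt_id x).const_mul π).sin.neg).mul
    ((((hasDerivAt_id x).const_mul n).exp).const_sub 1)).congr_deriv ?_
  simp; ring

lemma continuous_aFun : Continuous aFun := by unfold aFun; fun_prop
lemma continuous_aDer : Continuous aDer := by unfold aDer; fun_prop
lemma continuous_bFun (n : ℝ) : Continuous (bFun n) := by unfold bFun; fun_prop
lemma continuous_bDer (n : ℝ) : Continuous (bDer n) := by unfold bDer; fun_prop

lemma aDer_of_nonneg {x : ℝ} (hx : 0 ≤ x) : aDer x = 0 := by simp [aDer, min_eq_right hx]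
lemma bFun_of_nonneg (n : ℝ) {x : ℝ} (hx : 0 ≤ x) : bFun n x = 0 := by
  simp [bFun, min_eq_right hx]
lemma bDer_of_nonneg (n : ℝ) {x : ℝ} (hx : 0 ≤ x) : bDer n x = 0 := by
  simp [bDer, min_eq_right hx]

lemma aFun_neg_one : aFun (-1) = 0 := by
  simp [aFun]
lemma bFun_neg_one (n : ℝ) : bFun n (-1) = 0 := by
  simp [bFun]

/-- The symmetric trial function `a(x₁) bₙ(x₂) + bₙ(x₁) a(x₂)` on the finite guide. -/
def testFun (n : ℝ) (p : ℝ × ℝ) : ℝ := aFun p.1 * bFun n p.2 + bFun n p.1 * aFun p.2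

lemma contDiff_testFun (n : ℝ) : ContDiff ℝ 1 (testFun n) := by
  have h1 := contDiff_of_hasDerivAt hasDerivAt_aFun continuous_aDer
  have h2 := contDiff_of_hasDerivAt (hasDerivAt_bFun n) (continuous_bDer n)
  unfold testFun
  fun_prop

lemma gradSq2_testFun (n : ℝ) (p : ℝ × ℝ) : gradSq2 (testFun n) p =
    (aDer p.1 * bFun n p.2 + bDer n p.1 * aFun p.2) ^ 2 +
    (aFun p.1 * bDer n p.2 + bFun n p.1 * aDer p.2) ^ 2 := by
  have a1 := (hasDerivAt_aFun p.1).comp_hasFDerivAt p (hasFDerivAt_fst (𝕜 := ℝ) (p := p))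
  have a2 := (hasDerivAt_aFun p.2).comp_hasFDerivAt p (hasFDerivAt_snd (𝕜 := ℝ) (p := p))
  have b1 := (hasDerivAt_bFun n p.1).comp_hasFDerivAt p (hasFDerivAt_fst (𝕜 := ℝ) (p := p))
  have b2 := (hasDerivAt_bFun n p.2).comp_hasFDerivAt p (hasFDerivAt_snd (𝕜 := ℝ) (p := p))
  have h : HasFDerivAt (testFun n) _ p := (a1.mul b2).add (b1.mul a2)
  unfold gradSq2
  rw [h.fderiv]
  simp
  ring

lemma closure_GamR_subset {R : ℝ} (hR : 0 < R) :
    closure (GamR R) ⊆ Icc (-1) R ×ˢ Icc (-1) R :=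
  closure_minimal (GamR_subset_Icc hR) (isClosed_Icc.prod isClosed_Icc)

lemma admR_testFun {R : ℝ} (hR : 0 < R) (n : ℝ) : AdmR R (testFun n) := by
  refine ⟨contDiff_testFun n, fun p hp => ?_⟩
  obtain ⟨h1, h2⟩ := mem_of_DirB hp
  obtain ⟨⟨h3, -⟩, h4, -⟩ := closure_GamR_subset hR h1
  unfold testFun
  rcases eq_or_lt_of_le h3 with e | h3
  · rw [← e, aFun_neg_one, bFun_neg_one]; ring
  rcases eq_or_lt_of_le h4 with e | h4
  · rw [← e, aFun_neg_one, bFun_neg_one]; ring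
  have h5 : 0 ≤ p.1 ∧ 0 ≤ p.2 := by
    rw [← le_min_iff]
    by_contra h
    exact h2 ⟨lt_min h3 h4, not_le.1 h⟩
  rw [bFun_of_nonneg n h5.1, bFun_of_nonneg n h5.2]; ring

/-- A function vanishing on the quadrant `x₁, x₂ ≥ 0` has the same integral over `Γ_R` as over the
whole square `(-1, R)²`, which is a product set. -/
lemma setIntegral_GamR_eq {R : ℝ} (hR : 0 < R) {f : ℝ × ℝ → ℝ}
    (hf : ∀ p : ℝ × ℝ, 0 ≤ p.1 → 0 ≤ p.2 → f p = 0) :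
    ∫ p in GamR R, f p = ∫ p in Ioo (-1) R ×ˢ Ioo (-1) R, f p := by
  symm
  refine setIntegral_eq_of_subset_of_forall_sdiff_eq_zero
    (measurableSet_Ioo.prod measurableSet_Ioo) ?_ ?_
  · intro p hp
    obtain ⟨h1, h2, -⟩ := (mem_GamR hR p).1 hp
    exact ⟨h1, h2⟩
  · rintro p ⟨⟨h1, h2⟩, h3⟩
    rw [mem_GamR hR] at h3
    have : ¬ (p.1 < 0 ∨ p.2 < 0) := fun h => h3 ⟨h1, h2, h⟩
    rw [not_or, not_lt, not_lt] at this
    exact hf p this.1 this.2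

lemma integral_three {R : ℝ} {f₁ f₂ f₃ g₁ g₂ g₃ : ℝ → ℝ} (hf₁ : Continuous f₁)
    (hf₂ : Continuous f₂) (hf₃ : Continuous f₃) (hg₁ : Continuous g₁) (hg₂ : Continuous g₂)
    (hg₃ : Continuous g₃) :
    ∫ p in Ioo (-1) R ×ˢ Ioo (-1) R, (f₁ p.1 * g₁ p.2 + f₂ p.1 * g₂ p.2 + f₃ p.1 * g₃ p.2) =
      (∫ x in Ioo (-1) R, f₁ x) * (∫ x in Ioo (-1) R, g₁ x) +
      (∫ x in Ioo (-1) R, f₂ x) * (∫ x in Ioo (-1) R, g₂ x) +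
      (∫ x in Ioo (-1) R, f₃ x) * (∫ x in Ioo (-1) R, g₃ x) := by
  have hs : Ioo (-1) R ×ˢ Ioo (-1) R ⊆ Icc (-1) R ×ˢ Icc (-1) R :=
    prod_mono Ioo_subset_Icc_self Ioo_subset_Icc_self
  rw [integral_add (integrableOn_of_subset_Icc (by fun_prop) hs)
    (integrableOn_of_subset_Icc (by fun_prop) hs),
    integral_add (integrableOn_of_subset_Icc (by fun_prop) hs)
    (integrableOn_of_subset_Icc (by fun_prop) hs), Measure.volume_eq_prod,
    setIntegral_prod_mul, setIntegral_prod_mul, setIntegral_prod_mul]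

lemma setIntegral_eq_interval {R : ℝ} (hR : 0 < R) {f : ℝ → ℝ} (hf : ∀ x, 0 ≤ x → f x = 0) :
    ∫ x in Ioo (-1) R, f x = ∫ x in (-1 : ℝ)..0, f x := by
  rw [intervalIntegral.integral_of_le (by norm_num), integral_Ioc_eq_integral_Ioo]
  refine setIntegral_eq_of_subset_of_forall_sdiff_eq_zero measurableSet_Ioo
    (Ioo_subset_Ioo_right hR.le) ?_
  rintro x ⟨h1, h2⟩
  refine hf x (not_lt.1 fun h => h2 ⟨h1.1, h⟩)

/-- The variational inequality for `λ₁(Γ_R)` at the trial function, with both sides written through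
one-dimensional integrals. -/
lemma test_ineq {R : ℝ} (hR : 0 < R) (n : ℝ) :
    lamR R * (2 * (∫ x in Ioo (-1) R, aFun x ^ 2) * (∫ x in (-1 : ℝ)..0, bFun n x ^ 2)
        + 2 * (∫ x in (-1 : ℝ)..0, aFun x * bFun n x) ^ 2) ≤
      2 * ((∫ x in (-1 : ℝ)..0, aDer x ^ 2) * (∫ x in (-1 : ℝ)..0, bFun n x ^ 2)
        + 2 * (∫ x in (-1 : ℝ)..0, aDer x * bDer n x) * (∫ x in (-1 : ℝ)..0, aFun x * bFun n x)
        + (∫ x in (-1 : ℝ)..0, bDer n x ^ 2) * (∫ x in Ioo (-1) R, aFun x ^ 2)) := by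
  have h := lamR_mul_le (admR_testFun hR n)
  have ca := continuous_aFun
  have ca' := continuous_aDer
  have cb := continuous_bFun n
  have cb' := continuous_bDer n
  have z := fun x (hx : 0 ≤ x) => aDer_of_nonneg hx
  have z1 := fun x (hx : 0 ≤ x) => bFun_of_nonneg n hx
  have z2 := fun x (hx : 0 ≤ x) => bDer_of_nonneg n hx
  have hs : Ioo (-1) R ×ˢ Ioo (-1) R ⊆ Icc (-1) R ×ˢ Icc (-1) R :=
    prod_mono Ioo_subset_Icc_self Ioo_subset_Icc_self
  simp only [gradSq2_testFun] at h
  rw [setIntegral_GamR_eq hR (fun p h1 h2 => by simp [testFun, z1 _ h1, z1 _ h2]),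
    setIntegral_GamR_eq hR (fun p h1 h2 => by simp [z1 _ h1, z1 _ h2, z2 _ h1, z2 _ h2])] at h
  have e1 : ∀ p : ℝ × ℝ, testFun n p ^ 2 = aFun p.1 ^ 2 * bFun n p.2 ^ 2
      + (2 * (aFun p.1 * bFun n p.1)) * (aFun p.2 * bFun n p.2)
      + bFun n p.1 ^ 2 * aFun p.2 ^ 2 := by
    intro p; unfold testFun; ring
  have e2 : ∀ p : ℝ × ℝ, (aDer p.1 * bFun n p.2 + bDer n p.1 * aFun p.2) ^ 2 =
      aDer p.1 ^ 2 * bFun n p.2 ^ 2 + (2 * (aDer p.1 * bDer n p.1)) * (aFun p.2 * bFun n p.2)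
      + bDer n p.1 ^ 2 * aFun p.2 ^ 2 := by
    intro p; ring
  have e3 : ∀ p : ℝ × ℝ, (aFun p.1 * bDer n p.2 + bFun n p.1 * aDer p.2) ^ 2 =
      aFun p.1 ^ 2 * bDer n p.2 ^ 2 + (2 * (aFun p.1 * bFun n p.1)) * (aDer p.2 * bDer n p.2)
      + bFun n p.1 ^ 2 * aDer p.2 ^ 2 := by
    intro p; ring
  rw [integral_add (integrableOn_of_subset_Icc (by fun_prop) hs)
    (integrableOn_of_subset_Icc (by fun_prop) hs)] at h
  simp only [e1, e2, e3] at h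
  rw [integral_three (f₁ := fun x => aFun x ^ 2) (f₂ := fun x => 2 * (aFun x * bFun n x))
      (f₃ := fun x => bFun n x ^ 2) (g₁ := fun x => bFun n x ^ 2)
      (g₂ := fun x => aFun x * bFun n x) (g₃ := fun x => aFun x ^ 2)
      (by fun_prop) (by fun_prop) (by fun_prop) (by fun_prop) (by fun_prop) (by fun_prop),
    integral_three (f₁ := fun x => aDer x ^ 2) (f₂ := fun x => 2 * (aDer x * bDer n x))
      (f₃ := fun x => bDer n x ^ 2) (g₁ := fun x => bFun n x ^ 2)
      (g₂ := fun x => aFun x * bFun n x) (g₃ := fun x => aFun x ^ 2)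
      (by fun_prop) (by fun_prop) (by fun_prop) (by fun_prop) (by fun_prop) (by fun_prop),
    integral_three (f₁ := fun x => aFun x ^ 2) (f₂ := fun x => 2 * (aFun x * bFun n x))
      (f₃ := fun x => bFun n x ^ 2) (g₁ := fun x => bDer n x ^ 2)
      (g₂ := fun x => aDer x * bDer n x) (g₃ := fun x => aDer x ^ 2)
      (by fun_prop) (by fun_prop) (by fun_prop) (by fun_prop) (by fun_prop) (by fun_prop)] at h
  simp only [integral_const_mul] at h
  rw [setIntegral_eq_interval hR (f := fun x => bFun n x ^ 2) (fun x hx => by simp [z1 x hx]),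
    setIntegral_eq_interval hR (f := fun x => aFun x * bFun n x) (fun x hx => by simp [z1 x hx]),
    setIntegral_eq_interval hR (f := fun x => aDer x ^ 2) (fun x hx => by simp [z x hx]),
    setIntegral_eq_interval hR (f := fun x => aDer x * bDer n x) (fun x hx => by simp [z x hx]),
    setIntegral_eq_interval hR (f := fun x => bDer n x ^ 2) (fun x hx => by simp [z2 x hx])] at h
  refine le_trans (le_of_eq ?_) (h.trans (le_of_eq ?_)) <;> ring

lemma abs_aFun_le (x : ℝ) : |aFun x| ≤ 1 := abs_cos_le_one _

lemma abs_aDer_le (x : ℝ) : |aDer x| ≤ π := by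
  unfold aDer
  rw [abs_mul, abs_neg, abs_of_pos (by positivity)]
  nlinarith [abs_sin_le_one (π / 2 * min x 0), pi_pos]

lemma abs_one_sub_exp_le {n x : ℝ} (hn : 0 ≤ n) : |1 - exp (n * min x 0)| ≤ 1 := by
  have h1 : exp (n * min x 0) ≤ 1 :=
    exp_le_one_iff.2 (mul_nonpos_of_nonneg_of_nonpos hn (min_le_right _ _))
  have h2 := exp_pos (n * min x 0)
  rw [abs_le]; constructor <;> linarith

lemma abs_bFun_le {n : ℝ} (hn : 0 ≤ n) (x : ℝ) : |bFun n x| ≤ 1 := by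
  unfold bFun
  rw [abs_mul, abs_neg]
  exact mul_le_one₀ (abs_sin_le_one _) (abs_nonneg _) (abs_one_sub_exp_le hn)

/-- The bound is uniform in `n`, which dominated convergence requires. -/
lemma abs_bDer_le {n : ℝ} (hn : 0 ≤ n) (x : ℝ) : |bDer n x| ≤ 2 * π := by
  unfold bDer
  have hm : min x 0 ≤ 0 := min_le_right _ _
  have h3 := abs_one_sub_exp_le (x := x) hn
  set y := min x 0
  have h1 : |(-(π * cos (π * y))) * (1 - exp (n * y))| ≤ π := by
    rw [abs_mul, abs_neg, abs_mul, abs_of_pos pi_pos]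
    have := mul_le_one₀ (abs_cos_le_one (π * y)) (abs_nonneg _) h3
    nlinarith [pi_pos]
  -- `s e^{-s} ≤ 1` with `s = -n y`
  have h2 : |n * exp (n * y) * sin (π * y)| ≤ π := by
    rw [abs_mul, abs_of_nonneg (mul_nonneg hn (exp_pos _).le)]
    have hs : |sin (π * y)| ≤ π * (-y) := by
      refine abs_sin_le_abs.trans ?_
      rw [abs_mul, abs_of_pos pi_pos, abs_of_nonpos hm]
    have he : (-(n * y)) * exp (n * y) ≤ 1 := by
      have h4 := add_one_le_exp (-(n * y))
      have h5 := exp_pos (n * y)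
      have h6 : exp (-(n * y)) * exp (n * y) = 1 := by rw [← exp_add]; simp
      nlinarith
    calc n * exp (n * y) * |sin (π * y)| ≤ n * exp (n * y) * (π * (-y)) := by gcongr
      _ = π * ((-(n * y)) * exp (n * y)) := by ring
      _ ≤ π * 1 := by gcongr
      _ = π := mul_one _
  calc _ ≤ _ := abs_add_le _ _
    _ ≤ 2 * π := by linarith

lemma tendsto_bFun {x : ℝ} (hx : x < 0) :
    Filter.Tendsto (fun n : ℕ => bFun n x) Filter.atTop (nhds (-sin (π * x))) := by
  have h : Filter.Tendsto (fun n : ℕ => exp ((n : ℝ) * x)) Filter.atTop (nhds 0) := by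
    refine tendsto_exp_atBot.comp ?_
    exact tendsto_natCast_atTop_atTop.atTop_mul_const_of_neg hx
  simp only [bFun, min_eq_left hx.le]
  simpa using (h.const_sub 1).const_mul (-sin (π * x))

lemma tendsto_bDer {x : ℝ} (hx : x < 0) :
    Filter.Tendsto (fun n : ℕ => bDer n x) Filter.atTop (nhds (-(π * cos (π * x)))) := by
  have h : Filter.Tendsto (fun n : ℕ => exp ((n : ℝ) * x)) Filter.atTop (nhds 0) := by
    refine tendsto_exp_atBot.comp ?_
    exact tendsto_natCast_atTop_atTop.atTop_mul_const_of_neg hx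
  have h' : Filter.Tendsto (fun n : ℕ => (n : ℝ) * exp ((n : ℝ) * x)) Filter.atTop (nhds 0) := by
    have := tendsto_self_mul_const_pow_of_lt_one (exp_pos x).le (exp_lt_one_iff.2 hx)
    refine this.congr fun n => ?_
    rw [exp_nat_mul]
  simp only [bDer, min_eq_left hx.le]
  simpa using ((h.const_sub 1).const_mul (-(π * cos (π * x)))).add (h'.mul_const (sin (π * x)))

/-- Bounded convergence on `(-1, 0)`. -/
lemma tendsto_integral_of_bound {F : ℕ → ℝ → ℝ} {f : ℝ → ℝ} (C : ℝ) (hF : ∀ n, Continuous (F n))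
    (hb : ∀ n x, |F n x| ≤ C)
    (hl : ∀ x, x < 0 → Filter.Tendsto (fun n => F n x) Filter.atTop (nhds (f x))) :
    Filter.Tendsto (fun n => ∫ x in (-1 : ℝ)..0, F n x) Filter.atTop
      (nhds (∫ x in (-1 : ℝ)..0, f x)) := by
  refine intervalIntegral.tendsto_integral_filter_of_dominated_convergence (fun _ => C)
    (Filter.Eventually.of_forall fun n => (hF n).aestronglyMeasurable)
    (Filter.Eventually.of_forall fun n => Filter.Eventually.of_forall fun x _ => hb n x)
    (by simp) ?_
  have : ∀ᵐ x : ℝ, x ≠ 0 := by simp [ae_iff]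
  filter_upwards [this] with x hx hx'
  rw [uIoc_of_le (by norm_num)] at hx'
  exact hl x (lt_of_le_of_ne hx'.2 hx)

lemma hasDerivAt_lin (c x : ℝ) : HasDerivAt (fun x : ℝ => c * x) c x := by
  simpa using (hasDerivAt_id x).const_mul c

lemma integral_B : ∫ x in (-1 : ℝ)..0, (-sin (π * x)) ^ 2 = 1 / 2 := by
  have hd : ∀ x ∈ uIcc (-1 : ℝ) 0, HasDerivAt
      (fun x => x / 2 - sin (π * x) * cos (π * x) / (2 * π)) ((-sin (π * x)) ^ 2) x := by
    intro x _
    have := ((hasDerivAt_id x).div_const 2).sub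
      (((hasDerivAt_lin π x).sin.mul (hasDerivAt_lin π x).cos).div_const (2 * π))
    refine this.congr_deriv ?_
    have := sin_sq_add_cos_sq (π * x)
    field_simp
    nlinarith
  rw [intervalIntegral.integral_eq_sub_of_hasDerivAt hd
    (Continuous.intervalIntegrable (by fun_prop) _ _)]
  simp; norm_num

lemma integral_B' : ∫ x in (-1 : ℝ)..0, (-(π * cos (π * x))) ^ 2 = π ^ 2 / 2 := by
  have hd : ∀ x ∈ uIcc (-1 : ℝ) 0, HasDerivAt
      (fun x => π ^ 2 * (x / 2 + sin (π * x) * cos (π * x) / (2 * π)))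
      ((-(π * cos (π * x))) ^ 2) x := by
    intro x _
    have := (((hasDerivAt_id x).div_const 2).add
      (((hasDerivAt_lin π x).sin.mul (hasDerivAt_lin π x).cos).div_const (2 * π))).const_mul (π ^ 2)
    refine this.congr_deriv ?_
    have h : sin (π * x) ^ 2 = 1 - cos (π * x) ^ 2 := sin_sq _
    field_simp
    ring_nf
    rw [h]; ring
  rw [intervalIntegral.integral_eq_sub_of_hasDerivAt hd
    (Continuous.intervalIntegrable (by fun_prop) _ _)]
  simp; ring

lemma integral_aDer_sq : ∫ x in (-1 : ℝ)..0, aDer x ^ 2 = π ^ 2 / 8 := by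
  have hd : ∀ x ∈ uIcc (-1 : ℝ) 0, HasDerivAt
      (fun x => π ^ 2 / 4 * (x / 2 - sin (π / 2 * x) * cos (π / 2 * x) / π))
      (aDer x ^ 2) x := by
    intro x hx
    rw [uIcc_of_le (by norm_num)] at hx
    have := (((hasDerivAt_id x).div_const 2).sub
      (((hasDerivAt_lin (π / 2) x).sin.mul (hasDerivAt_lin (π / 2) x).cos).div_const
        π)).const_mul (π ^ 2 / 4)
    refine this.congr_deriv ?_
    have h : cos (π / 2 * x) ^ 2 = 1 - sin (π / 2 * x) ^ 2 := cos_sq' _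
    rw [aDer, min_eq_left hx.2]
    field_simp
    ring_nf at h ⊢
    rw [h]; ring
  have := continuous_aDer
  rw [intervalIntegral.integral_eq_sub_of_hasDerivAt hd
    (Continuous.intervalIntegrable (by fun_prop) _ _)]
  simp; ring

lemma integral_C : ∫ x in (-1 : ℝ)..0, aFun x * (-sin (π * x)) = 4 / (3 * π) := by
  have hd : ∀ x ∈ uIcc (-1 : ℝ) 0, HasDerivAt
      (fun x => 4 / (3 * π) * cos (π / 2 * x) ^ 3) (aFun x * (-sin (π * x))) x := by
    intro x hx
    rw [uIcc_of_le (by norm_num)] at hx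
    have := (((hasDerivAt_lin (π / 2) x).cos).pow 3).const_mul (4 / (3 * π))
    refine this.congr_deriv ?_
    have h : sin (π * x) = 2 * sin (π / 2 * x) * cos (π / 2 * x) := by
      rw [← sin_two_mul]; congr 1; ring
    rw [aFun, min_eq_left hx.2, h]
    field_simp
    norm_num
    ring
  have := continuous_aFun
  rw [intervalIntegral.integral_eq_sub_of_hasDerivAt hd
    (Continuous.intervalIntegrable (by fun_prop) _ _)]
  simp

lemma integral_D : ∫ x in (-1 : ℝ)..0, aDer x * (-(π * cos (π * x))) = π / 3 := by
  have hd : ∀ x ∈ uIcc (-1 : ℝ) 0, HasDerivAt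
      (fun x => π * cos (π / 2 * x) - 2 * π / 3 * cos (π / 2 * x) ^ 3)
      (aDer x * (-(π * cos (π * x)))) x := by
    intro x hx
    rw [uIcc_of_le (by norm_num)] at hx
    have := ((hasDerivAt_lin (π / 2) x).cos.const_mul π).sub
      ((((hasDerivAt_lin (π / 2) x).cos).pow 3).const_mul (2 * π / 3))
    refine this.congr_deriv ?_
    have h : cos (π * x) = 2 * cos (π / 2 * x) ^ 2 - 1 := by
      rw [← cos_two_mul]; congr 1; ring
    rw [aDer, min_eq_left hx.2, h]
    norm_num
    ring
  have := continuous_aDer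
  rw [intervalIntegral.integral_eq_sub_of_hasDerivAt hd
    (Continuous.intervalIntegrable (by fun_prop) _ _)]
  simp; ring

/-- In the limit `n → ∞` the trial function gives, with `A = ∫ a²`,
`λ₁(Γ_R) (A + 32 / (9 π²)) ≤ π² A + π² / 8 + 16 / 9`, and `π² / 8 + 16 / 9 < 32 / 9`. -/
lemma lamR_le_pi_sq {R : ℝ} (hR : 0 < R) : lamR R ≤ π ^ 2 := by
  have ca := continuous_aFun
  have ca' := continuous_aDer
  have cb := fun n : ℕ => continuous_bFun n
  have cb' := fun n : ℕ => continuous_bDer n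
  have hn := fun n : ℕ => (Nat.cast_nonneg n : (0 : ℝ) ≤ n)
  have tB := tendsto_integral_of_bound (F := fun n x => bFun n x ^ 2)
    (f := fun x => (-sin (π * x)) ^ 2) 1 (by fun_prop)
    (fun n x => by
      rw [abs_pow]; exact pow_le_one₀ (abs_nonneg _) (abs_bFun_le (hn n) x))
    (fun x hx => (tendsto_bFun hx).pow 2)
  have tB' := tendsto_integral_of_bound (F := fun n x => bDer n x ^ 2)
    (f := fun x => (-(π * cos (π * x))) ^ 2) ((2 * π) ^ 2) (by fun_prop)
    (fun n x => by
      rw [abs_pow]; exact pow_le_pow_left₀ (abs_nonneg _) (abs_bDer_le (hn n) x) 2)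
    (fun x hx => (tendsto_bDer hx).pow 2)
  have tC := tendsto_integral_of_bound (F := fun n x => aFun x * bFun n x)
    (f := fun x => aFun x * (-sin (π * x))) (1 * 1) (by fun_prop)
    (fun n x => by
      rw [abs_mul]
      exact mul_le_mul (abs_aFun_le x) (abs_bFun_le (hn n) x) (abs_nonneg _) zero_le_one)
    (fun x hx => (tendsto_bFun hx).const_mul _)
  have tD := tendsto_integral_of_bound (F := fun n x => aDer x * bDer n x)
    (f := fun x => aDer x * (-(π * cos (π * x)))) (π * (2 * π)) (by fun_prop)
    (fun n x => by
      rw [abs_mul]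
      exact mul_le_mul (abs_aDer_le x) (abs_bDer_le (hn n) x) (abs_nonneg _) pi_pos.le)
    (fun x hx => (tendsto_bDer hx).const_mul _)
  rw [integral_B] at tB
  rw [integral_B'] at tB'
  rw [integral_C] at tC
  rw [integral_D] at tD
  have key := le_of_tendsto_of_tendsto'
    (((tB.const_mul (2 * ∫ x in Ioo (-1) R, aFun x ^ 2)).add
      ((tC.pow 2).const_mul 2)).const_mul (lamR R))
    ((((tB.const_mul (∫ x in (-1 : ℝ)..0, aDer x ^ 2)).add
      ((tD.const_mul 2).mul tC)).add
      (tB'.mul_const (∫ x in Ioo (-1) R, aFun x ^ 2))).const_mul 2)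
    (fun n => test_ineq hR n)
  rw [integral_aDer_sq] at key
  have hA : 0 ≤ ∫ x in Ioo (-1) R, aFun x ^ 2 := integral_nonneg fun x => sq_nonneg _
  set A := ∫ x in Ioo (-1) R, aFun x ^ 2
  have hπ : π < 3.15 := pi_lt_d2
  have hπ0 := pi_pos
  have e : 2 * (π / 3) * (4 / (3 * π)) = 8 / 9 := by field_simp; norm_num
  have e2 : π ^ 2 * (4 / (3 * π)) ^ 2 = 16 / 9 := by field_simp; norm_num
  rw [e] at key
  have hpos : 0 < A + 2 * (4 / (3 * π)) ^ 2 := by positivity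
  refine le_of_mul_le_mul_right ?_ hpos
  nlinarith

/-! ### The lower bound on slices and integration over the slices -/

lemma hasDerivAt_snd {w : ℝ × ℝ → ℝ} (hw : ContDiff ℝ 1 w) (x y : ℝ) :
    HasDerivAt (fun y => w (x, y)) (fderiv ℝ w (x, y) (0, 1)) y := by
  have h := ((hw.differentiable one_ne_zero) (x, y)).hasFDerivAt
  exact h.comp_hasDerivAt y ((hasDerivAt_const y x).prodMk (hasDerivAt_id y))

/-- On an arm of the guide the transversal Dirichlet conditions alone give the bound `π²`. -/
lemma arm_nonneg {w : ℝ × ℝ → ℝ} (hw : ContDiff ℝ 1 w) {l R t : ℝ} (hl : l ≤ π ^ 2)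
    (hR : 0 < R) (h0 : ∀ x ∈ Ico R t, w (x, -1) = 0) (h1 : ∀ x ∈ Ico R t, w (x, 0) = 0) :
    0 ≤ ∫ p in Ico R t ×ˢ Ioo (-1 : ℝ) 0, (gradSq2 w p - l * w p ^ 2) := by
  rcases le_or_gt t R with htR | htR
  · simp [Ico_eq_empty (not_lt.2 htR)]
  have hwc := hw.continuous
  have hgc := continuous_gradSq2 hw
  have hfc := hw.continuous_fderiv one_ne_zero
  have hint : IntegrableOn (fun p => gradSq2 w p - l * w p ^ 2) (Ico R t ×ˢ Ioo (-1 : ℝ) 0) := by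
    refine integrableOn_of_subset_Icc (t := t) (by fun_prop) ?_
    apply prod_mono
    · intro x hx; exact ⟨by linarith [hx.1], hx.2.le⟩
    · intro x hx; exact ⟨hx.1.le, by linarith [hx.2]⟩
  rw [Measure.volume_eq_prod] at hint ⊢
  rw [setIntegral_prod _ hint]
  refine setIntegral_nonneg measurableSet_Ico fun x hx => ?_
  rw [← integral_Ioc_eq_integral_Ioo, ← intervalIntegral.integral_of_le (by norm_num)]
  have hW := wirtinger (v := fun y => w (x, y)) (hasDerivAt_snd hw x) (by fun_prop)
    (h0 x hx) (h1 x hx)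
  have hsq : 0 ≤ ∫ y in (-1 : ℝ)..0, w (x, y) ^ 2 :=
    intervalIntegral.integral_nonneg (by norm_num) fun y _ => sq_nonneg _
  have c1 : Continuous fun y => gradSq2 w (x, y) := by fun_prop
  have c2 : Continuous fun y => w (x, y) ^ 2 := by fun_prop
  have c3 : Continuous fun y => (fderiv ℝ w (x, y) (0, 1)) ^ 2 := by fun_prop
  rw [intervalIntegral.integral_sub (c1.intervalIntegrable _ _)
    ((c2.const_mul _).intervalIntegrable _ _), intervalIntegral.integral_const_mul]
  have hg : (∫ y in (-1 : ℝ)..0, (fderiv ℝ w (x, y) (0, 1)) ^ 2)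
      ≤ ∫ y in (-1 : ℝ)..0, gradSq2 w (x, y) := by
    refine intervalIntegral.integral_mono_on (by norm_num) (c3.intervalIntegrable _ _)
      (c1.intervalIntegrable _ _) fun y _ => ?_
    unfold gradSq2
    nlinarith [sq_nonneg (fderiv ℝ w (x, y) (1, 0))]
  have := mul_le_mul_of_nonneg_right hl hsq
  linarith

lemma gradSq2_swap {w : ℝ × ℝ → ℝ} (hw : ContDiff ℝ 1 w) (p : ℝ × ℝ) :
    gradSq2 (fun q => w q.swap) p = gradSq2 w p.swap := by
  have h := ((hw.differentiable one_ne_zero) p.swap).hasFDerivAt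
  have h2 : HasFDerivAt (fun q : ℝ × ℝ => w q.swap)
      ((fderiv ℝ w p.swap).comp ((ContinuousLinearEquiv.prodComm ℝ ℝ ℝ) : ℝ × ℝ →L[ℝ] ℝ × ℝ)) p :=
    HasFDerivAt.comp (g := w) p h (ContinuousLinearEquiv.prodComm ℝ ℝ ℝ).hasFDerivAt
  unfold gradSq2
  rw [h2.fderiv]
  simp [add_comm]

lemma GamR_decomp {R t : ℝ} (hR : 0 < R) (ht : R < t) :
    GamR t = (GamR R ∪ Ico R t ×ˢ Ioo (-1 : ℝ) 0) ∪ Ioo (-1 : ℝ) 0 ×ˢ Ico R t := by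
  ext p
  simp only [mem_union, mem_GamR hR, mem_GamR (hR.trans ht), mem_prod, mem_Ico, mem_Ioo]
  constructor
  · rintro ⟨⟨h1, h2⟩, ⟨h3, h4⟩, h5⟩
    rcases lt_or_ge p.1 R with h6 | h6
    · rcases lt_or_ge p.2 R with h7 | h7
      · exact Or.inl (Or.inl ⟨⟨h1, h6⟩, ⟨h3, h7⟩, h5⟩)
      · refine Or.inr ⟨⟨h1, ?_⟩, h7, h4⟩
        rcases h5 with h | h <;> linarith
    · refine Or.inl (Or.inr ⟨⟨h6, h2⟩, h3, ?_⟩)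
      rcases h5 with h | h <;> linarith
  · rintro ((⟨⟨h1, h2⟩, ⟨h3, h4⟩, h5⟩ | ⟨⟨h1, h2⟩, h3, h4⟩) | ⟨⟨h1, h2⟩, h3, h4⟩)
    · exact ⟨⟨h1, h2.trans ht⟩, ⟨h3, h4.trans ht⟩, h5⟩
    · exact ⟨⟨by linarith, h2⟩, ⟨h3, by linarith⟩, Or.inr h4⟩
    · exact ⟨⟨h1, by linarith⟩, ⟨by linarith, h4⟩, Or.inl h2⟩

/-- The guide `Γ_t` inherits the lower bound `λ₁(Γ_R)` of the shorter guide `Γ_R`, provided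
`λ₁(Γ_R) ≤ π²`: the inner part `Γ_R` is controlled by the definition of `λ₁(Γ_R)` and the two
remaining rectangles by `arm_nonneg`. -/
lemma slice_nonneg {R t : ℝ} (hR : 0 < R) (ht : R < t) (hl : lamR R ≤ π ^ 2)
    {w : ℝ × ℝ → ℝ} (hw : ContDiff ℝ 1 w) (h0 : ∀ p ∈ closure (GamR t), p ∉ Gam → w p = 0) :
    0 ≤ ∫ p in GamR t, (gradSq2 w p - lamR R * w p ^ 2) := by
  have ht0 := hR.trans ht
  have hwc := hw.continuous
  have hgc := continuous_gradSq2 hw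
  have hc : Continuous fun p => gradSq2 w p - lamR R * w p ^ 2 := by fun_prop
  have hint := integrableOn_of_subset_Icc hc (GamR_subset_Icc ht0)
  have hdec := GamR_decomp hR ht
  have i1 := hint.mono_set (hdec ▸ subset_union_left)
  have i2 := hint.mono_set (hdec ▸ subset_union_right)
  rw [hdec, setIntegral_union ?_ (measurableSet_Ioo.prod measurableSet_Ico) i1 i2,
    setIntegral_union ?_ (measurableSet_Ico.prod measurableSet_Ioo)
      (i1.mono_set subset_union_left) (i1.mono_set subset_union_right)]
  · have hadm : AdmR R w := by
      refine ⟨hw, fun p hp => ?_⟩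
      obtain ⟨a, b⟩ := mem_of_DirB hp
      exact h0 p (closure_mono (GamR_mono ht.le) a) b
    have e1 : 0 ≤ ∫ p in GamR R, (gradSq2 w p - lamR R * w p ^ 2) := by
      have hs := GamR_subset_Icc hR
      rw [integral_sub (integrableOn_of_subset_Icc hgc hs)
        (integrableOn_of_subset_Icc (by fun_prop) hs), integral_const_mul]
      linarith [lamR_mul_le hadm]
    have hz : ∀ x ∈ Ico R t, ∀ y ∈ Icc (-1 : ℝ) 0, y = -1 ∨ y = 0 →
        w (x, y) = 0 ∧ w (y, x) = 0 := by
      intro x hx y hy hy'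
      have hx0 : -1 < x := by linarith [hx.1]
      constructor
      · refine h0 _ (mem_closure_arm ht0 hx0 hx.2 hy) ?_
        rintro ⟨g1, g2⟩
        simp only [lt_min_iff, min_lt_iff] at g1 g2
        rcases hy' with rfl | rfl <;> grind
      · refine h0 _ (mem_closure_arm' ht0 hx0 hx.2 hy) ?_
        rintro ⟨g1, g2⟩
        simp only [lt_min_iff, min_lt_iff] at g1 g2
        rcases hy' with rfl | rfl <;> grind
    have e2 := arm_nonneg hw hl hR (t := t)
      (fun x hx => (hz x hx (-1) (by norm_num) (by norm_num)).1)
      (fun x hx => (hz x hx 0 (by norm_num) (by norm_num)).1)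
    have hw' : ContDiff ℝ 1 fun q : ℝ × ℝ => w q.swap := by
      unfold Prod.swap; fun_prop
    have e3 := arm_nonneg hw' hl hR (t := t)
      (fun x hx => (hz x hx (-1) (by norm_num) (by norm_num)).2)
      (fun x hx => (hz x hx 0 (by norm_num) (by norm_num)).2)
    simp only [gradSq2_swap hw] at e3
    have e4 := setIntegral_prod_swap (μ := (volume : Measure ℝ)) (ν := (volume : Measure ℝ))
      (Ioo (-1 : ℝ) 0) (Ico R t) (fun p => gradSq2 w p - lamR R * w p ^ 2)
    rw [← Measure.volume_eq_prod] at e4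
    rw [e4] at e3
    linarith
  · rw [Set.disjoint_left]
    rintro p hp ⟨h1, h2⟩
    have := ((mem_GamR hR p).1 hp).1
    linarith [h1.1]
  · rw [Set.disjoint_left]
    rintro p hp ⟨h1, h2⟩
    rcases hp with hp | hp
    · have := ((mem_GamR hR p).1 hp).2.1
      linarith [h2.1]
    · linarith [hp.2.2, h2.1]

lemma gradSq2_slice {u : ℝ × ℝ × ℝ → ℝ} (hu : ContDiff ℝ 1 u) (t : ℝ) (p : ℝ × ℝ) :
    gradSq2 (fun q => u (q.1, q.2, t)) p ≤ gradSq3 u (p.1, p.2, t) := by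
  have h := ((hu.differentiable one_ne_zero) (p.1, p.2, t)).hasFDerivAt
  have hi : HasFDerivAt (fun q : ℝ × ℝ => ((q.1, q.2, t) : ℝ × ℝ × ℝ))
      ((ContinuousLinearMap.fst ℝ ℝ ℝ).prod ((ContinuousLinearMap.snd ℝ ℝ ℝ).prod 0)) p :=
    hasFDerivAt_fst.prodMk (hasFDerivAt_snd.prodMk (hasFDerivAt_const t p))
  have h2 := HasFDerivAt.comp (g := u) p h hi
  unfold gradSq2 gradSq3
  rw [show (fun q : ℝ × ℝ => u (q.1, q.2, t)) = u ∘ fun q : ℝ × ℝ => (q.1, q.2, t) from rfl,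
    h2.fderiv]
  simp
  positivity

/-- The form inequality on `Ω_R³` by integrating `slice_nonneg` over the slices `x₃ = t`. -/
lemma Om3_bound_of_lamR_le {R : ℝ} (hR : 0 < R) (hl : lamR R ≤ π ^ 2) {u : ℝ × ℝ × ℝ → ℝ}
    (hu : ContDiff ℝ 1 u) (hs : HasCompactSupport u)
    (h0 : ∀ x ∈ frontier (Om3 R) ∩ frontier Lam3, u x = 0) :
    lamR R * ∫ x in Om3 R, (u x) ^ 2 ≤ ∫ x in Om3 R, gradSq3 u x := by
  have huc := hu.continuous
  have hgc := continuous_gradSq3 hu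
  have hgs : HasCompactSupport (gradSq3 u) := by
    refine (hs.fderiv ℝ).comp_left (g := fun L : ℝ × ℝ × ℝ →L[ℝ] ℝ =>
      (L (1, 0, 0)) ^ 2 + (L (0, 1, 0)) ^ 2 + (L (0, 0, 1)) ^ 2) ?_
    simp
  have hus : HasCompactSupport fun x => u x ^ 2 :=
    hs.comp_left (g := fun y : ℝ => y ^ 2) (by simp)
  have ig : Integrable (gradSq3 u) := hgc.integrable_of_hasCompactSupport hgs
  have iu : Integrable fun x => u x ^ 2 :=
    Continuous.integrable_of_hasCompactSupport (by fun_prop) hus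
  have hmeas := (isOpen_Om3 R).measurableSet
  rw [← sub_nonneg, ← integral_const_mul, ← integral_sub ig.integrableOn
    (iu.const_mul _).integrableOn, ← integral_indicator hmeas]
  set h : ℝ × ℝ × ℝ → ℝ := (Om3 R).indicator fun x => gradSq3 u x - lamR R * u x ^ 2 with hh
  have hi : Integrable h := (ig.sub (iu.const_mul _)).indicator hmeas
  have hmp := measurePreserving_prodAssoc (volume : Measure ℝ) (volume : Measure ℝ)
    (volume : Measure ℝ)
  have hi' : Integrable (fun z : (ℝ × ℝ) × ℝ => h (MeasurableEquiv.prodAssoc z))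
      ((volume : Measure (ℝ × ℝ)).prod volume) :=
    (hmp.integrable_comp_emb MeasurableEquiv.prodAssoc.measurableEmbedding).2 hi
  have e : ∫ x, h x = ∫ t : ℝ, ∫ p : ℝ × ℝ, h (p.1, p.2, t) := by
    have := hmp.integral_comp' h
    exact this.symm.trans (integral_prod_symm _ hi')
  rw [e]
  refine integral_nonneg fun t => ?_
  rcases le_or_gt t R with ht | ht
  · have : ∀ p : ℝ × ℝ, h (p.1, p.2, t) = 0 := fun p =>
      indicator_of_notMem (fun hx => absurd hx.1 (not_lt.2 ht)) _
    simp [this]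
  · have hin : (fun p : ℝ × ℝ => h (p.1, p.2, t)) = (GamR t).indicator
        fun p => gradSq3 u (p.1, p.2, t) - lamR R * u (p.1, p.2, t) ^ 2 := by
      ext p
      by_cases hp : p ∈ GamR t
      · rw [indicator_of_mem hp, hh, indicator_of_mem (show (p.1, p.2, t) ∈ Om3 R from ⟨ht, hp⟩)]
      · rw [indicator_of_notMem hp, hh, indicator_of_notMem fun hx => hp hx.2]
    have hw : ContDiff ℝ 1 fun q : ℝ × ℝ => u (q.1, q.2, t) := by fun_prop
    have hwc := hw.continuous
    have hwg := continuous_gradSq2 hw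
    have hsub := GamR_subset_Icc (hR.trans ht)
    change 0 ≤ ∫ p : ℝ × ℝ, h (p.1, p.2, t)
    rw [hin, integral_indicator (isOpen_GamR t).measurableSet]
    refine (slice_nonneg hR ht hl hw fun p hp hG => slice_zero hR ht h0 hp hG).trans ?_
    refine setIntegral_mono (integrableOn_of_subset_Icc (by fun_prop) hsub)
      (integrableOn_of_subset_Icc (by fun_prop) hsub) fun p => ?_
    have := gradSq2_slice hu t p
    simp only
    linarith

/-- key estimate in §3.1: for every `R > 0` and every
`u ∈ H¹(Ω_R³)` vanishing on `∂Ω_R³ ∩ ∂Λ` (modelled by a compactly supported `C¹`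
function), one has `∫_{Ω_R³} |∇u|² dx ≥ λ₁(Γ_R) ∫_{Ω_R³} |u|² dx`. -/
theorem Om3_form_lower_bound :
    ∀ R : ℝ, 0 < R → ∀ u : ℝ × ℝ × ℝ → ℝ,
      ContDiff ℝ 1 u → HasCompactSupport u →
      (∀ x ∈ frontier (Om3 R) ∩ frontier Lam3, u x = 0) →
      lamR R * ∫ x in Om3 R, (u x) ^ 2 ≤ ∫ x in Om3 R, gradSq3 u x := by
  intro R hR u hu hs h0
  exact Om3_bound_of_lamR_le hR (lamR_le_pi_sq hR) hu hs h0
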